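/- Let g(z,W) = 1/(a⁴+z⁴−2a²z²W) − 1/(1+a⁴z⁴−2a²z²W) for nonzero complex a, z. For nonzero complex variables z_1,…,z_M such that a⁴+z_i⁴−2a²z_i² ≠ 0 and 1+a⁴z_i⁴−2a²z_i² ≠ 0 for all i, the limit as (W_1,…,W_M) → (1,…,1) (along W_i pairwise distinct) of det_{M×M}(g(z_i,W_j)) / ∏_{1≤i<j≤M}(W_j−W_i) exists and equals det_{M×M}( (2a²z_i²)^{j−1}/(a⁴+z_i⁴−2a²z_i²)^j − (2a²z_i²)^{j−1}/(1+a⁴z_i⁴−2a²z_i²)^j ). -/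

import Mathlib

open Finset

/-!
Newton interpolation of `x ↦ (A - c x)⁻¹` at the nodes `W j` is exact at the nodes, so the matrix of
values factors as (divided differences) × (Newton basis at the nodes). The second factor is
triangular and its determinant is the Vandermonde product, which cancels the denominator. What
remains is the determinant of the divided differences `c ^ k / ∏ l ≤ k, (A - c W l)`, an expression
that stays continuous when the nodes collide.
-/

open Filter Topology

section NewtonInterpolation

variable {ι R : Type*} [LinearOrder ι] [LocallyFiniteOrderBot ι]

/-- The values of the Newton basis polynomials `∏ l < k, (X - w l)` at the nodes `w`: rows are
indexed by basis polynomials and columns by nodes. -/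
def newtonMatrix [CommRing R] (w : ι → R) : Matrix ι ι R :=
  Matrix.of fun k j => ∏ l ∈ Iio k, (w j - w l)

theorem det_newtonMatrix [Fintype ι] [CommRing R] (w : ι → R) :
    (newtonMatrix w).det = ∏ p : ι × ι with p.1 < p.2, (w p.2 - w p.1) := by
  have isUpperTriangular : (newtonMatrix w).IsUpperTriangular := fun k j hjk =>
    prod_eq_zero (mem_Iio.mpr hjk) (sub_self (w j))
  rw [Matrix.det_of_isUpperTriangular isUpperTriangular,
    prod_finset_product_right _ univ fun j => Iio j]
  · rfl
  · simp only [mem_filter_univ, mem_univ, mem_Iio, true_and, implies_true]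

theorem det_newtonMatrix_ne_zero [Fintype ι] [CommRing R] [IsDomain R] {w : ι → R}
    (hw : Function.Injective w) : (newtonMatrix w).det ≠ 0 := by
  rw [det_newtonMatrix, prod_ne_zero_iff]
  exact fun p hp => sub_ne_zero.mpr (hw.ne (mem_filter.mp hp).2.ne')

variable {K : Type*} [Field K]

theorem inv_eq_sum_prod_Iio_sub_div_prod_Iic [Fintype ι] {f : ι → K} (hf : ∀ l, f l ≠ 0) (j : ι) :
    (f j)⁻¹ = ∑ k, (∏ l ∈ Iio k, (f l - f j)) / ∏ l ∈ Iic k, f l := by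
  have prod_Iic_mul_prod_gt (k : ι) : (∏ l ∈ Iic k, f l) * ∏ l with k < l, f l = ∏ l, f l := by
    simpa only [filter_ge_eq_Iic, not_le] using prod_filter_mul_prod_filter_not univ (· ≤ k) f
  -- `∏ l, (f l - f j)` vanishes because of its factor `l = j`; expand it one factor at a time.
  have prod_eq_sum : ∏ l, f l =
      ∑ k, f j * (∏ l ∈ Iio k, (f l - f j)) * ∏ l with k < l, f l := by
    simp only [← filter_gt_eq_Iio]
    rw [← sub_eq_zero, ← prod_sub_ordered]
    exact prod_eq_zero (mem_univ j) (sub_self _)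
  have prod_ne_zero : ∏ l, f l ≠ 0 := prod_ne_zero_iff.mpr fun l _ => hf l
  calc
    (f j)⁻¹ = (∏ l, f l) / (f j * ∏ l, f l) := (div_mul_cancel_right₀ prod_ne_zero _).symm
    _ = ∑ k, f j * (∏ l ∈ Iio k, (f l - f j)) * (∏ l with k < l, f l) / (f j * ∏ l, f l) := by
      rw [← sum_div, ← prod_eq_sum]
    _ = ∑ k, (∏ l ∈ Iio k, (f l - f j)) / ∏ l ∈ Iic k, f l := by
      refine sum_congr rfl fun k _ => ?_
      have prod_gt_ne_zero : ∏ l with k < l, f l ≠ 0 := prod_ne_zero_iff.mpr fun l _ => hf l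
      rw [← prod_Iic_mul_prod_gt k, ← mul_assoc, mul_div_mul_right _ _ prod_gt_ne_zero,
        mul_div_mul_left _ _ (hf j)]

/-- The divided difference of `x ↦ (A - c * x)⁻¹` over the nodes `w l` with `l ≤ k`, in closed form:
it is the `k`-th Newton interpolation coefficient of this function. The closed form also covers
coinciding nodes. -/
def invDividedDifference (A c : K) (w : ι → K) (k : ι) : K :=
  c ^ #(Iio k) / ∏ l ∈ Iic k, (A - c * w l)

theorem sum_invDividedDifference_mul_newtonMatrix [Fintype ι] {A c : K} {w : ι → K}
    (hw : ∀ l, A - c * w l ≠ 0) (j : ι) :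
    ∑ k, invDividedDifference A c w k * newtonMatrix w k j = (A - c * w j)⁻¹ := by
  rw [inv_eq_sum_prod_Iio_sub_div_prod_Iic hw j]
  refine sum_congr rfl fun k _ => ?_
  have factor_sub (l : ι) : A - c * w l - (A - c * w j) = c * (w j - w l) := by ring
  simp only [invDividedDifference, newtonMatrix, Matrix.of_apply, factor_sub, prod_mul_distrib,
    prod_const, div_mul_eq_mul_div]

end NewtonInterpolation

section Confluence

theorem eventually_forall_sub_mul_ne_zero {ι K : Type*} [Finite ι] [Ring K] [TopologicalSpace K]
    [IsTopologicalRing K] [T1Space K] {A c x : K} (h : A - c * x ≠ 0) :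
    ∀ᶠ W : ι → K in 𝓝 fun _ => x, ∀ l, A - c * W l ≠ 0 := by
  refine eventually_all.mpr fun l => ?_
  have continuous_factor : Continuous fun W : ι → K => A - c * W l := by fun_prop
  exact continuous_factor.continuousAt.eventually_ne h

variable {ι K : Type*} [LinearOrder ι] [LocallyFiniteOrderBot ι]
  [Field K] [TopologicalSpace K]

theorem tendsto_det_mul_newtonMatrix_div [Fintype ι] [IsTopologicalRing K] {l : Filter (ι → K)}
    {F D : (ι → K) → Matrix ι ι K} {D₀ : Matrix ι ι K}
    (hl : ∀ᶠ W in l, Function.Injective W) (hF : ∀ᶠ W in l, F W = D W * newtonMatrix W)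
    (hD : Tendsto D l (𝓝 D₀)) :
    Tendsto (fun W => (F W).det / ∏ p : ι × ι with p.1 < p.2, (W p.2 - W p.1)) l (𝓝 D₀.det) := by
  have tendsto_det : Tendsto (fun W => (D W).det) l (𝓝 D₀.det) :=
    (continuous_id.matrix_det.tendsto D₀).comp hD
  refine tendsto_det.congr' ?_
  filter_upwards [hl, hF] with W hW hFW
  rw [hFW, Matrix.det_mul, ← det_newtonMatrix,
    mul_div_cancel_right₀ _ (det_newtonMatrix_ne_zero hW)]

theorem tendsto_invDividedDifference [IsTopologicalDivisionRing K] {A c x : K}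
    (h : A - c * x ≠ 0) (k : ι) :
    Tendsto (fun W => invDividedDifference A c W k) (𝓝 fun _ => x)
      (𝓝 (c ^ #(Iio k) / (A - c * x) ^ (#(Iio k) + 1))) := by
  have continuous_prod : Continuous fun W : ι → K => ∏ l ∈ Iic k, (A - c * W l) := by fun_prop
  have tendsto_prod : Tendsto (fun W : ι → K => ∏ l ∈ Iic k, (A - c * W l)) (𝓝 fun _ => x)
      (𝓝 ((A - c * x) ^ (#(Iio k) + 1))) := by
    simpa only [prod_const, Iic_eq_cons_Iio, card_cons] using continuous_prod.tendsto fun _ => x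
  exact tendsto_const_nhds.div tendsto_prod (pow_ne_zero _ h)

theorem confluent_determinant_limit_general [Fintype ι] [IsTopologicalDivisionRing K]
    [T1Space K] {A B c d : ι → K} {x : K}
    (hA : ∀ i, A i - c i * x ≠ 0) (hB : ∀ i, B i - d i * x ≠ 0) :
    Tendsto
      (fun W : ι → K =>
        (Matrix.of fun i j => (A i - c i * W j)⁻¹ - (B i - d i * W j)⁻¹).det /
          ∏ p : ι × ι with p.1 < p.2, (W p.2 - W p.1))
      (𝓝[{W | Function.Injective W}] fun _ => x)
      (𝓝 (Matrix.of fun i j =>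
        c i ^ #(Iio j) / (A i - c i * x) ^ (#(Iio j) + 1) -
          d i ^ #(Iio j) / (B i - d i * x) ^ (#(Iio j) + 1)).det) := by
  refine tendsto_det_mul_newtonMatrix_div (D := fun W => Matrix.of fun i k =>
    invDividedDifference (A i) (c i) W k - invDividedDifference (B i) (d i) W k)
    self_mem_nhdsWithin (nhdsWithin_le_nhds ?_) (tendsto_nhdsWithin_of_tendsto_nhds ?_)
  · filter_upwards [eventually_all.mpr fun i => eventually_forall_sub_mul_ne_zero (hA i),
      eventually_all.mpr fun i => eventually_forall_sub_mul_ne_zero (hB i)] with W hAW hBW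
    ext i j
    simp only [Matrix.mul_apply, Matrix.of_apply, sub_mul, sum_sub_distrib,
      sum_invDividedDifference_mul_newtonMatrix (hAW i),
      sum_invDividedDifference_mul_newtonMatrix (hBW i)]
  · exact tendsto_pi_nhds.mpr fun i => tendsto_pi_nhds.mpr fun k =>
      (tendsto_invDividedDifference (hA i) k).sub (tendsto_invDividedDifference (hB i) k)

end Confluence

/-- The Izergin-Coker-Korepin style confluent (homogeneous) limit of the Cauchy-type
determinant appearing in the factor `P₂` in the proof of Theorem 6.3: for
`g(z,W) = 1/(a⁴+z⁴−2a²z²W) − 1/(1+a⁴z⁴−2a²z²W)`, the ratio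
`det(g(z_i,W_j)) / ∏_{i<j}(W_j−W_i)` tends, as `(W_1,…,W_M) → (1,…,1)` along
pairwise-distinct tuples, to the confluent determinant. -/
theorem confluent_determinant_limit (M : ℕ) (a : ℂ) (ha : a ≠ 0)
    (z : Fin M → ℂ) (hz : ∀ i, z i ≠ 0)
    (h1 : ∀ i, a ^ 4 + z i ^ 4 - 2 * a ^ 2 * z i ^ 2 ≠ 0)
    (h2 : ∀ i, 1 + a ^ 4 * z i ^ 4 - 2 * a ^ 2 * z i ^ 2 ≠ 0) :
    Filter.Tendsto
      (fun W : Fin M → ℂ =>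
        Matrix.det (Matrix.of fun i j : Fin M =>
          (a ^ 4 + z i ^ 4 - 2 * a ^ 2 * z i ^ 2 * W j)⁻¹
            - (1 + a ^ 4 * z i ^ 4 - 2 * a ^ 2 * z i ^ 2 * W j)⁻¹) /
        ∏ p ∈ Finset.univ.filter (fun p : Fin M × Fin M => p.1 < p.2), (W p.2 - W p.1))
      (nhdsWithin (fun _ => (1 : ℂ)) {W : Fin M → ℂ | ∀ i j, i ≠ j → W i ≠ W j})
      (nhds (Matrix.det (Matrix.of fun i j : Fin M =>
        (2 * a ^ 2 * z i ^ 2) ^ (j : ℕ) / (a ^ 4 + z i ^ 4 - 2 * a ^ 2 * z i ^ 2) ^ ((j : ℕ) + 1)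
          - (2 * a ^ 2 * z i ^ 2) ^ (j : ℕ) /
            (1 + a ^ 4 * z i ^ 4 - 2 * a ^ 2 * z i ^ 2) ^ ((j : ℕ) + 1)))) := by
  simpa only [Function.Injective, not_imp_not, ne_eq, mul_one, Fin.card_Iio] using
    confluent_determinant_limit_general (x := 1) (A := fun i => a ^ 4 + z i ^ 4)
      (B := fun i => 1 + a ^ 4 * z i ^ 4) (c := fun i => 2 * a ^ 2 * z i ^ 2)
      (d := fun i => 2 * a ^ 2 * z i ^ 2) (by simpa using h1) (by simpa using h2)
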